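/- arXiv:2302.12456 — 2 statements merged into one kernel-verified Lean document; each statement's English description precedes it below -/
import Mathlib

section
/- Let A and B be d×d real symmetric positive definite matrices such that A − B is positive semidefinite. Then for every x ∈ ℝ^d, (xᵀ A x) · det(B) ≤ (xᵀ B x) · det(A); equivalently, for every x ≠ 0, (xᵀ A x)/(xᵀ B x) ≤ det(A)/det(B). -/
/-!
The inequality holds already in the Loewner order: `det B • A ≤ det A • B`. If `B` is singular, the
left side vanishes and the right side is nonnegative. Otherwise `B = Sᴴ S` with `S` invertible, and
a congruence by `S` reduces to `B = 1`: if `M ≥ 1`, then every eigenvalue of `M` is at most the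
product `det M` of all of them, as the remaining ones are at least `1`, so `M ≤ det M • 1`.
-/

open Matrix

section

open scoped ComplexOrder MatrixOrder

theorem le_prod_of_one_le {ι R : Type*} [CommMonoidWithZero R] [PartialOrder R]
    [ZeroLEOneClass R] [PosMulMono R] {s : Finset ι} {f : ι → R} (hf : ∀ i ∈ s, 1 ≤ f i)
    {i : ι} (hi : i ∈ s) : f i ≤ ∏ j ∈ s, f j := by
  rw [← Finset.prod_singleton f i]
  exact Finset.prod_le_prod_of_subset_of_one_le (Finset.singleton_subset_iff.mpr hi)
    (fun j hj ↦ zero_le_one.trans (hf j (Finset.mem_singleton.mp hj ▸ hi))) fun j hj _ ↦ hf j hj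

variable {n 𝕜 : Type*} [Fintype n] [RCLike 𝕜]

theorem dotProduct_mulVec_le_dotProduct_mulVec {A B : Matrix n n 𝕜} (h : A ≤ B) (x : n → 𝕜) :
    star x ⬝ᵥ A *ᵥ x ≤ star x ⬝ᵥ B *ᵥ x := by
  have hBA := (Matrix.le_iff.mp h).dotProduct_mulVec_nonneg x
  rwa [sub_mulVec, dotProduct_sub, sub_nonneg] at hBA

variable [DecidableEq n]

theorem le_det_smul_one {M : Matrix n n 𝕜} (hM : 1 ≤ M) : M ≤ M.det • 1 := by
  have hMh : M.IsHermitian := (zero_le_one.trans hM).posSemidef.isHermitian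
  have one_le_eigenvalues (i : n) : 1 ≤ hMh.eigenvalues i :=
    (CFC.one_le_iff (R := ℝ) M hMh).mp hM _ (hMh.eigenvalues_mem_spectrum_real i)
  have le_prod : M ≤ algebraMap ℝ (Matrix n n 𝕜) (∏ i, hMh.eigenvalues i) := by
    refine le_algebraMap_of_spectrum_le (fun r hr ↦ ?_) hMh
    obtain ⟨i, rfl⟩ := hMh.spectrum_real_eq_range_eigenvalues ▸ hr
    exact le_prod_of_one_le (fun j _ ↦ one_le_eigenvalues j) (Finset.mem_univ i)
  convert le_prod using 1
  rw [hMh.det_eq_prod_eigenvalues, ← RCLike.ofReal_prod, Algebra.algebraMap_eq_smul_one,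
    RCLike.real_smul_eq_coe_smul (K := 𝕜)]

theorem det_smul_le_det_smul_of_posDef {A B : Matrix n n 𝕜} (hB : B.PosDef) (hAB : B ≤ A) :
    B.det • A ≤ A.det • B := by
  obtain ⟨S, hS, rfl⟩ :=
    CStarAlgebra.isStrictlyPositive_iff_eq_star_mul_self.mp hB.isStrictlyPositive
  obtain ⟨M, rfl⟩ : ∃ M, A = star S * M * S := by
    obtain ⟨T, hTS⟩ := hS.exists_left_inv
    refine ⟨star T * A * T, ?_⟩
    calc A = star (T * S) * A * (T * S) := by rw [hTS, star_one, one_mul, mul_one]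
      _ = star S * (star T * A * T) * S := by simp only [star_mul, mul_assoc]
  have hM : 1 ≤ M := by
    rw [← sub_nonneg, ← hS.star_left_conjugate_nonneg_iff]
    simpa only [mul_sub, sub_mul, mul_one, sub_nonneg] using hAB
  have conj_le : star S * M * S ≤ M.det • (star S * S) := by
    simpa only [mul_smul_comm, smul_mul_assoc, mul_one] using
      star_left_conjugate_le_conjugate (le_det_smul_one hM) S
  calc (star S * S).det • (star S * M * S)
      ≤ (star S * S).det • M.det • (star S * S) :=
        smul_le_smul_of_nonneg_left conj_le hB.det_pos.le
    _ = (star S * M * S).det • (star S * S) := by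
        simp only [smul_smul, det_mul, mul_right_comm]

theorem det_smul_le_det_smul {A B : Matrix n n 𝕜} (hB : B.PosSemidef) (hAB : B ≤ A) :
    B.det • A ≤ A.det • B := by
  by_cases hdet : B.det = 0
  · have hA : A.PosSemidef := (hB.nonneg.trans hAB).posSemidef
    rw [hdet, zero_smul]
    exact (hB.smul hA.det_nonneg).nonneg
  · exact det_smul_le_det_smul_of_posDef (hB.posDef_iff_det_ne_zero.mpr hdet) hAB

theorem dotProduct_mulVec_mul_det_le {A B : Matrix n n 𝕜} (hB : B.PosSemidef) (hAB : B ≤ A)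
    (x : n → 𝕜) : (star x ⬝ᵥ A *ᵥ x) * B.det ≤ (star x ⬝ᵥ B *ᵥ x) * A.det := by
  have h := dotProduct_mulVec_le_dotProduct_mulVec (det_smul_le_det_smul hB hAB) x
  simpa only [smul_mulVec, dotProduct_smul, smul_eq_mul, mul_comm] using h

theorem stmt0_general {A B : Matrix n n 𝕜} (hB : B.PosDef) (hAB : (A - B).PosSemidef) :
    (∀ x : n → 𝕜, (star x ⬝ᵥ A *ᵥ x) * B.det ≤ (star x ⬝ᵥ B *ᵥ x) * A.det) ∧
    (∀ x : n → 𝕜, x ≠ 0 →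
      (star x ⬝ᵥ A *ᵥ x) / (star x ⬝ᵥ B *ᵥ x) ≤ A.det / B.det) := by
  have mul_det_le := dotProduct_mulVec_mul_det_le hB.posSemidef (Matrix.le_iff.mpr hAB)
  refine ⟨mul_det_le, fun x hx ↦ ?_⟩
  rw [div_le_div_iff₀ (hB.dotProduct_mulVec_pos hx) hB.det_pos, mul_comm A.det]
  exact mul_det_le x

end

/-- If `A ⪰ B ≻ 0` then `xᵀAx · det B ≤ xᵀBx · det A`, equivalently for `x ≠ 0`
`(xᵀAx)/(xᵀBx) ≤ det A / det B`. -/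
theorem stmt0 (d : ℕ) (A B : Matrix (Fin d) (Fin d) ℝ)
    (hA : A.PosDef) (hB : B.PosDef) (hAB : (A - B).PosSemidef) :
    (∀ x : Fin d → ℝ, (x ⬝ᵥ A.mulVec x) * B.det ≤ (x ⬝ᵥ B.mulVec x) * A.det) ∧
    (∀ x : Fin d → ℝ, x ≠ 0 →
      (x ⬝ᵥ A.mulVec x) / (x ⬝ᵥ B.mulVec x) ≤ A.det / B.det) := by
  simpa only [star_trivial] using stmt0_general hB hAB
end

section
/- Let A and B be d×d real symmetric positive definite matrices such that A − B is positive semidefinite and det(A) ≤ 2·det(B). Then for every x ∈ ℝ^d, xᵀ B⁻¹ x ≤ 2 · xᵀ A⁻¹ x. -/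
open Matrix

/-!
The claim is monotonicity of the adjugate in disguise: for `0 ≺ B ⪯ A` one has `adj B ⪯ adj A`,
that is, `det B • B⁻¹ ⪯ det A • A⁻¹`, and a bound `det A ≤ c * det B` turns this into
`B⁻¹ ⪯ c • A⁻¹`. Since the adjugate is anti-multiplicative, an inequality between adjugates is
preserved by congruence. Two congruences, by a factor `Q` of `B = Q⋆ Q` and by a unitary matrix,
reduce to `B = 1` and `A` diagonal with entries at least `1`; then the diagonal entries of `adj A`
are products of such numbers.
-/

section Adjugate

open scoped ComplexOrder MatrixOrder

variable {n 𝕜 : Type*} [Fintype n] [DecidableEq n] [RCLike 𝕜]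

lemma adjugate_star_conjugate_le {X Y : Matrix n n 𝕜} (h : X.adjugate ≤ Y.adjugate)
    (Q : Matrix n n 𝕜) : (star Q * X * Q).adjugate ≤ (star Q * Y * Q).adjugate := by
  simp only [adjugate_mul_distrib, star_eq_conjTranspose, ← adjugate_conjTranspose, ← mul_assoc]
  exact star_right_conjugate_le_conjugate h Q.adjugate

lemma one_le_adjugate_diagonal {v : n → 𝕜} (hv : ∀ i, 1 ≤ v i) :
    1 ≤ (diagonal v).adjugate := by
  rw [adjugate_diagonal, le_iff, ← diagonal_one, diagonal_sub, posSemidef_diagonal_iff]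
  exact fun i ↦ sub_nonneg.mpr (Finset.one_le_prod fun j _ ↦ hv j)

lemma one_le_adjugate {T : Matrix n n 𝕜} (hT : 1 ≤ T) : 1 ≤ T.adjugate := by
  have hHerm : T.IsHermitian := by simpa using hT.isHermitian.add isHermitian_one
  have heig (i : n) : (1 : 𝕜) ≤ hHerm.eigenvalues i := by
    exact_mod_cast (CFC.one_le_iff T).mp hT _ (hHerm.eigenvalues_mem_spectrum_real i)
  set U : Matrix n n 𝕜 := ↑hHerm.eigenvectorUnitary
  set D : Matrix n n 𝕜 := diagonal (RCLike.ofReal ∘ hHerm.eigenvalues)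
  have hU : U * star U = 1 := Unitary.coe_mul_star_self hHerm.eigenvectorUnitary
  have hTU : T = U * D * star U := by
    simpa only [Unitary.conjStarAlgAut_apply] using hHerm.spectral_theorem
  have hD : (1 : Matrix n n 𝕜).adjugate ≤ D.adjugate :=
    adjugate_one.trans_le (one_le_adjugate_diagonal heig)
  simpa [hU, ← hTU] using adjugate_star_conjugate_le hD (star U)

theorem adjugate_le_adjugate {A B : Matrix n n 𝕜} (hB : B.PosDef) (hBA : B ≤ A) :
    B.adjugate ≤ A.adjugate := by
  obtain ⟨Q, hQ, rfl⟩ := CStarAlgebra.isStrictlyPositive_iff_eq_star_mul_self.mp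
    hB.isStrictlyPositive
  obtain ⟨P, hQP⟩ := hQ.exists_right_inv
  have hPQ : P * Q = 1 := mul_eq_one_comm.mp hQP
  set T : Matrix n n 𝕜 := star P * A * P with hT
  have hTA : star Q * T * Q = A := by
    calc star Q * T * Q = star (P * Q) * A * (P * Q) := by simp only [hT, star_mul, mul_assoc]
      _ = A := by rw [hPQ, star_one, one_mul, mul_one]
  have hT_ge : 1 ≤ T := by
    calc (1 : Matrix n n 𝕜) = star (Q * P) * (Q * P) := by rw [hQP, star_one, mul_one]
      _ = star P * (star Q * Q) * P := by simp only [star_mul, mul_assoc]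
      _ ≤ T := star_left_conjugate_le_conjugate hBA P
  have hadj : (1 : Matrix n n 𝕜).adjugate ≤ T.adjugate :=
    adjugate_one.trans_le (one_le_adjugate hT_ge)
  simpa only [mul_one, hTA] using adjugate_star_conjugate_le hadj Q

theorem stmt1_general {A B : Matrix n n 𝕜} {c : 𝕜} (hB : B.PosDef) (hBA : B ≤ A)
    (hdet : A.det ≤ c * B.det) : B⁻¹ ≤ c • A⁻¹ := by
  have hA : A.PosDef := by simpa using hB.add_posSemidef hBA
  have hratio : (B.det)⁻¹ * A.det ≤ c := by
    rwa [inv_mul_le_iff₀ hB.det_pos, mul_comm]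
  calc B⁻¹ = (B.det)⁻¹ • B.adjugate := by rw [inv_def, Ring.inverse_eq_inv']
    _ ≤ (B.det)⁻¹ • A.adjugate :=
      smul_le_smul_of_nonneg_left (adjugate_le_adjugate hB hBA) (inv_nonneg.mpr hB.det_pos.le)
    _ = ((B.det)⁻¹ * A.det) • A⁻¹ := by
      rw [inv_def, Ring.inverse_eq_inv', smul_smul, mul_inv_cancel_right₀ hA.det_pos.ne']
    _ ≤ c • A⁻¹ := smul_le_smul_of_nonneg_right hratio hA.inv.posSemidef.nonneg

end Adjugate

/-- If `A ⪰ B ≻ 0` and `det A ≤ 2 det B` then `xᵀB⁻¹x ≤ 2 xᵀA⁻¹x`. -/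
theorem stmt1 (d : ℕ) (A B : Matrix (Fin d) (Fin d) ℝ)
    (hA : A.PosDef) (hB : B.PosDef) (hAB : (A - B).PosSemidef)
    (hdet : A.det ≤ 2 * B.det) :
    ∀ x : Fin d → ℝ, x ⬝ᵥ B⁻¹.mulVec x ≤ 2 * (x ⬝ᵥ A⁻¹.mulVec x) := fun x ↦ by
  simpa [sub_mulVec, smul_mulVec] using
    (stmt1_general hB hAB hdet).dotProduct_mulVec_nonneg x
end
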